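/- arXiv:2210.15325 — 2 statements merged into one kernel-verified Lean document; each statement's English description precedes it below -/
import Mathlib

section
/- For n ≥ 1, the geodesic transversal number of the rook's graph satisfies gt(K_n □ K_n) = n² − 2n + 2. -/
open SimpleGraph

/-- A geodesic (shortest path) in `G`: a path whose length equals the distance
between its endpoints. -/
def IsGeodesic {V : Type*} (G : SimpleGraph V) {u v : V} (p : G.Walk u v) : Prop :=
  p.IsPath ∧ p.length = G.dist u v

/-- A maximal geodesic: a geodesic that is not contained as a subpath of any longer
geodesic, equivalently it cannot be extended at either end to a longer geodesic. -/
def IsMaxGeodesic {V : Type*} (G : SimpleGraph V) {u v : V} (p : G.Walk u v) : Prop :=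
  IsGeodesic G p ∧
  (∀ w (h : G.Adj w u), ¬ IsGeodesic G (SimpleGraph.Walk.cons h p)) ∧
  (∀ w (h : G.Adj v w), ¬ IsGeodesic G (p.concat h))

/-- A set of vertices that is the vertex set of some maximal geodesic of `G`. -/
def IsMaxGeodesicSet {V : Type*} (G : SimpleGraph V) (s : Set V) : Prop :=
  ∃ (u v : V) (p : G.Walk u v), IsMaxGeodesic G p ∧ s = {x | x ∈ p.support}

/-- A geodesic packing: a family of pairwise vertex-disjoint maximal geodesics. -/
def IsGeodesicPacking {V : Type*} (G : SimpleGraph V) (P : Set (Set V)) : Prop :=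
  (∀ s ∈ P, IsMaxGeodesicSet G s) ∧ P.Pairwise Disjoint

/-- The geodesic packing number `gpack(G)`. -/
noncomputable def gpackNum {V : Type*} (G : SimpleGraph V) : ℕ :=
  sSup {k | ∃ P : Finset (Set V), IsGeodesicPacking G ↑P ∧ P.card = k}

/-- A geodesic transversal: a vertex set hitting every maximal geodesic. -/
def IsGeodesicTransversal {V : Type*} (G : SimpleGraph V) (S : Set V) : Prop :=
  ∀ s, IsMaxGeodesicSet G s → (S ∩ s).Nonempty

/-- The geodesic transversal number `gt(G)`. -/
noncomputable def gtransNum {V : Type*} (G : SimpleGraph V) : ℕ :=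
  sInf {k | ∃ S : Finset V, IsGeodesicTransversal G ↑S ∧ S.card = k}

/-!
The maximal geodesics of the rook's graph are the paths of two steps, one in each direction, so the
complement of a geodesic transversal is a set of squares each of which is alone in its row or alone
in its column. The squares alone in their row are at most as many as the rows, and strictly fewer if
some square of the set is not alone in its row, because the row of that square is then missed;
likewise for columns. Hence on an `a × b` board with `a, b ≥ 2` such a set has at most `a + b - 2`
squares, and a cross without its centre attains this bound.
-/

section MaximalGeodesics

variable {V : Type*} {G : SimpleGraph V} {u v w : V} {p : G.Walk u v}

theorem isGeodesic_iff_length_eq_dist : IsGeodesic G p ↔ p.length = G.dist u v :=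
  ⟨And.right, fun h => ⟨p.isPath_of_length_eq_dist h, h⟩⟩

theorem IsMaxGeodesic.dist_le_of_adj (hp : IsMaxGeodesic G p) (h : G.Adj v w) :
    G.dist u w ≤ G.dist u v := by
  obtain ⟨⟨-, hlen⟩, -, hmax⟩ := hp
  have hle : G.dist u w ≤ (p.concat h).length := dist_le _
  have hne : (p.concat h).length ≠ G.dist u w := mt isGeodesic_iff_length_eq_dist.2 (hmax w h)
  rw [Walk.length_concat] at hle hne
  omega

theorem IsGeodesic.isMaxGeodesic_of_forall_dist_le (hp : IsGeodesic G p)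
    (hdist : ∀ x y, G.dist x y ≤ p.length) : IsMaxGeodesic G p := by
  refine ⟨hp, fun x h hx => ?_, fun x h hx => ?_⟩
  · have hlt : p.length < G.dist x v := by simp [← hx.2]
    exact hlt.not_ge (hdist x v)
  · have hlt : p.length < G.dist u x := by simp [← hx.2]
    exact hlt.not_ge (hdist u x)

theorem isMaxGeodesicSet_bot_singleton (x : V) : IsMaxGeodesicSet (⊥ : SimpleGraph V) {x} :=
  ⟨x, x, .nil, ⟨by simp [isGeodesic_iff_length_eq_dist], fun _ h => h.elim, fun _ h => h.elim⟩,
    by simp⟩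

end MaximalGeodesics

section GeodesicFree

variable {V : Type*} {G : SimpleGraph V}

/-- A vertex set is geodesic-free if it contains no maximal geodesic; these are the complements
of the geodesic transversals. -/
def IsGeodesicFree (G : SimpleGraph V) (T : Set V) : Prop :=
  ∀ s, IsMaxGeodesicSet G s → ¬ s ⊆ T

theorem isGeodesicTransversal_iff_isGeodesicFree_compl {S : Set V} :
    IsGeodesicTransversal G S ↔ IsGeodesicFree G Sᶜ := by
  simp only [IsGeodesicTransversal, IsGeodesicFree, Set.subset_compl_iff_disjoint_left,
    Set.not_disjoint_iff_nonempty_inter]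

theorem gtransNum_eq_card_sub [Fintype V] {k : ℕ}
    (hk : IsGreatest {k | ∃ T : Finset V, IsGeodesicFree G ↑T ∧ T.card = k} k) :
    gtransNum G = Fintype.card V - k := by
  classical
  obtain ⟨⟨T, hT, rfl⟩, hmax⟩ := hk
  refine IsLeast.csInf_eq ⟨⟨Tᶜ, ?_, T.card_compl⟩, ?_⟩
  · simpa [isGeodesicTransversal_iff_isGeodesicFree_compl] using hT
  · rintro _ ⟨S, hS, rfl⟩
    have hle : Sᶜ.card ≤ T.card := hmax
      ⟨Sᶜ, by simpa [isGeodesicTransversal_iff_isGeodesicFree_compl] using hS, rfl⟩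
    have hcard := S.card_add_card_compl
    omega

theorem isGeodesicFree_bot_iff {T : Set V} : IsGeodesicFree (⊥ : SimpleGraph V) T ↔ T = ∅ := by
  constructor
  · intro hT
    refine Set.eq_empty_of_forall_notMem fun x hx => ?_
    exact hT {x} (isMaxGeodesicSet_bot_singleton x) (Set.singleton_subset_iff.2 hx)
  · rintro rfl s ⟨u, v, p, -, rfl⟩ hs
    exact hs p.start_mem_support

theorem gtransNum_bot [Fintype V] : gtransNum (⊥ : SimpleGraph V) = Fintype.card V := by
  refine gtransNum_eq_card_sub (k := 0) ⟨⟨∅, by simp [isGeodesicFree_bot_iff], rfl⟩, ?_⟩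
  rintro _ ⟨T, hT, rfl⟩
  exact (Finset.card_eq_zero.2 (Finset.coe_eq_empty.1 (isGeodesicFree_bot_iff.1 hT))).le

end GeodesicFree

section SoleInFiber

variable {ι κ : Type*} [DecidableEq ι] [DecidableEq κ] {f : ι → κ} {T : Finset ι} {x : ι}

/-- The elements of `T` that share their value under `f` with no other element of `T`. For a set
of squares of a board and `f` a coordinate projection, these are the squares alone in their line
of one of the two directions. -/
def soleInFiber (f : ι → κ) (T : Finset ι) : Finset ι :=
  {x ∈ T | ∀ y ∈ T, f y = f x → y = x}

theorem mem_soleInFiber : x ∈ soleInFiber f T ↔ x ∈ T ∧ ∀ y ∈ T, f y = f x → y = x :=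
  Finset.mem_filter

theorem injOn_soleInFiber : Set.InjOn f (soleInFiber f T) := fun _ hx _ hy h =>
  (mem_soleInFiber.1 hy).2 _ (mem_soleInFiber.1 hx).1 h

theorem card_soleInFiber_le [Fintype κ] : (soleInFiber f T).card ≤ Fintype.card κ :=
  Finset.card_le_card_of_injOn f (by simp) injOn_soleInFiber

theorem card_soleInFiber_lt [Fintype κ] (hx : x ∈ T) (hx' : x ∉ soleInFiber f T) :
    (soleInFiber f T).card < Fintype.card κ := by
  rw [← Finset.card_image_of_injOn injOn_soleInFiber]
  refine Finset.card_lt_univ_of_notMem (x := f x) fun h => ?_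
  obtain ⟨y, hy, hyx⟩ := Finset.mem_image.1 h
  exact hx' ((mem_soleInFiber.1 hy).2 x hx hyx.symm ▸ hy)

end SoleInFiber

section Board

variable {α β : Type*} [DecidableEq α] [DecidableEq β] [Fintype α] [Fintype β]

theorem card_add_two_le_of_subset_soleInFiber_union [Nontrivial α] [Nontrivial β]
    {T : Finset (α × β)}
    (hT : T ⊆ soleInFiber Prod.fst T ∪ soleInFiber Prod.snd T) :
    T.card + 2 ≤ Fintype.card α + Fintype.card β := by
  have hα : 1 < Fintype.card α := Fintype.one_lt_card
  have hβ : 1 < Fintype.card β := Fintype.one_lt_card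
  by_cases hfst : T ⊆ soleInFiber Prod.fst T
  · have hle := (Finset.card_le_card hfst).trans card_soleInFiber_le
    omega
  by_cases hsnd : T ⊆ soleInFiber Prod.snd T
  · have hle := (Finset.card_le_card hsnd).trans card_soleInFiber_le
    omega
  obtain ⟨x, hxT, hx⟩ := Finset.not_subset.1 hfst
  obtain ⟨y, hyT, hy⟩ := Finset.not_subset.1 hsnd
  have hunion := (Finset.card_le_card hT).trans (Finset.card_union_le _ _)
  have hltα := card_soleInFiber_lt hxT hx
  have hltβ := card_soleInFiber_lt hyT hy
  omega

/-- The squares in line with the centre `(a, b)`, which is itself left out. -/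
def puncturedCross (a : α) (b : β) : Finset (α × β) :=
  {a} ×ˢ {b}ᶜ ∪ {a}ᶜ ×ˢ {b}

theorem puncturedCross_subset_soleInFiber_union (a : α) (b : β) :
    puncturedCross a b ⊆ soleInFiber Prod.fst (puncturedCross a b) ∪
      soleInFiber Prod.snd (puncturedCross a b) := by
  intro x hx
  rcases Finset.mem_union.1 hx with hfst | hsnd
  · refine Finset.mem_union_right _ (mem_soleInFiber.2 ⟨hx, fun y hy hyx => ?_⟩)
    grind [puncturedCross, Finset.mem_compl]
  · refine Finset.mem_union_left _ (mem_soleInFiber.2 ⟨hx, fun y hy hyx => ?_⟩)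
    grind [puncturedCross, Finset.mem_compl]

theorem card_puncturedCross (a : α) (b : β) :
    (puncturedCross a b).card = Fintype.card α + Fintype.card β - 2 := by
  have hα : 0 < Fintype.card α := Fintype.card_pos_iff.2 ⟨a⟩
  have hβ : 0 < Fintype.card β := Fintype.card_pos_iff.2 ⟨b⟩
  have hdisj : Disjoint (({a} : Finset α) ×ˢ ({b}ᶜ : Finset β)) ({a}ᶜ ×ˢ {b}) :=
    Finset.disjoint_product.2 (.inl disjoint_compl_right)
  rw [puncturedCross, Finset.card_union_of_disjoint hdisj]
  simp only [Finset.card_product, Finset.card_compl, Finset.card_singleton]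
  omega

end Board

section RookGraph

/-- The rook's graph on the rectangular board `α × β`. -/
abbrev rookGraph (α β : Type*) : SimpleGraph (α × β) :=
  (⊤ : SimpleGraph α) □ (⊤ : SimpleGraph β)

variable {α β : Type*}

theorem dist_rookGraph [DecidableEq α] [DecidableEq β] (u v : α × β) :
    (rookGraph α β).dist u v = (if u.1 = v.1 then 0 else 1) + (if u.2 = v.2 then 0 else 1) := by
  rw [SimpleGraph.dist, edist_boxProd, edist_top, edist_top]
  split_ifs <;> rfl

theorem dist_rookGraph_le_two (u v : α × β) : (rookGraph α β).dist u v ≤ 2 := by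
  classical
  rw [dist_rookGraph]
  split_ifs <;> simp

theorem dist_rookGraph_eq_two_iff {u v : α × β} :
    (rookGraph α β).dist u v = 2 ↔ u.1 ≠ v.1 ∧ u.2 ≠ v.2 := by
  classical
  rw [dist_rookGraph]
  split_ifs <;> simp [*]

theorem exists_adj_dist_rookGraph_lt [Nontrivial α] [Nontrivial β] {u v : α × β}
    (h : (rookGraph α β).dist u v ≠ 2) :
    ∃ w, (rookGraph α β).Adj v w ∧ (rookGraph α β).dist u v < (rookGraph α β).dist u w := by
  classical
  rw [Ne, dist_rookGraph_eq_two_iff, not_and_or, not_ne_iff, not_ne_iff] at h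
  rcases h with hfst | hsnd
  · obtain ⟨a, ha⟩ := exists_ne v.1
    exact ⟨(a, v.2), by simp [boxProd_adj, ha.symm], by simp [dist_rookGraph, hfst, ha.symm]⟩
  · obtain ⟨b, hb⟩ := exists_ne v.2
    exact ⟨(v.1, b), by simp [boxProd_adj, hb.symm], by simp [dist_rookGraph, hsnd, hb.symm]⟩

theorem isMaxGeodesic_rookGraph_iff [Nontrivial α] [Nontrivial β] {u v : α × β}
    {p : (rookGraph α β).Walk u v} :
    IsMaxGeodesic (rookGraph α β) p ↔ p.length = 2 ∧ u.1 ≠ v.1 ∧ u.2 ≠ v.2 := by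
  rw [← dist_rookGraph_eq_two_iff]
  constructor
  · intro hp
    have hdist : (rookGraph α β).dist u v = 2 := by
      by_contra h
      obtain ⟨w, hvw, hlt⟩ := exists_adj_dist_rookGraph_lt h
      exact hlt.not_ge (hp.dist_le_of_adj hvw)
    exact ⟨hp.1.2.trans hdist, hdist⟩
  · rintro ⟨hlen, hdist⟩
    have hp : IsGeodesic (rookGraph α β) p :=
      isGeodesic_iff_length_eq_dist.2 (hlen.trans hdist.symm)
    exact hp.isMaxGeodesic_of_forall_dist_le fun x y => hlen ▸ dist_rookGraph_le_two x y

theorem eq_or_eq_of_rookGraph_adj_of_adj {u v w : α × β} (huw : (rookGraph α β).Adj u w)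
    (hwv : (rookGraph α β).Adj w v) (hfst : u.1 ≠ v.1) (hsnd : u.2 ≠ v.2) :
    w = (v.1, u.2) ∨ w = (u.1, v.2) := by
  simp only [boxProd_adj, top_adj] at huw hwv
  grind

theorem isMaxGeodesicSet_rookGraph_iff [Nontrivial α] [Nontrivial β] {s : Set (α × β)} :
    IsMaxGeodesicSet (rookGraph α β) s ↔
      ∃ a a' b b', a' ≠ a ∧ b' ≠ b ∧ s = {(a', b), (a, b), (a, b')} := by
  constructor
  · rintro ⟨u, v, p, hp, rfl⟩
    obtain ⟨hlen, hfst, hsnd⟩ := isMaxGeodesic_rookGraph_iff.1 hp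
    match p with
    | .cons huw (.cons hwv .nil) =>
      obtain rfl | rfl := eq_or_eq_of_rookGraph_adj_of_adj huw hwv hfst hsnd
      · exact ⟨v.1, u.1, u.2, v.2, hfst, hsnd.symm, by ext; simp⟩
      · exact ⟨u.1, v.1, v.2, u.2, hfst.symm, hsnd, by ext; simp [or_comm, or_left_comm]⟩
  · rintro ⟨a, a', b, b', ha, hb, rfl⟩
    have hfst : (rookGraph α β).Adj (a', b) (a, b) := by simp [boxProd_adj, ha]
    have hsnd : (rookGraph α β).Adj (a, b) (a, b') := by simp [boxProd_adj, hb.symm]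
    exact ⟨_, _, .cons hfst (.cons hsnd .nil),
      isMaxGeodesic_rookGraph_iff.2 ⟨rfl, ha, hb.symm⟩, by ext; simp⟩

theorem isGeodesicFree_rookGraph_iff [DecidableEq α] [DecidableEq β] [Nontrivial α]
    [Nontrivial β] {T : Finset (α × β)} :
    IsGeodesicFree (rookGraph α β) ↑T ↔
      T ⊆ soleInFiber Prod.fst T ∪ soleInFiber Prod.snd T := by
  simp only [IsGeodesicFree, isMaxGeodesicSet_rookGraph_iff, Finset.subset_iff, Finset.mem_union,
    mem_soleInFiber]
  constructor
  · rintro hT ⟨a, b⟩ hab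
    by_contra! h
    obtain ⟨⟨c, b'⟩, hrow, rfl, hb⟩ := h.1 hab
    obtain ⟨⟨a', c⟩, hcol, rfl, ha⟩ := h.2 hab
    exact hT _ ⟨_, a', _, b', by simpa using ha, by simpa using hb, rfl⟩
      (by simp [Set.insert_subset_iff, *])
  · rintro hT _ ⟨a, a', b, b', ha, hb, rfl⟩ h
    simp only [Set.insert_subset_iff, Set.singleton_subset_iff, Finset.mem_coe] at h
    obtain ⟨hcol, hab, hrow⟩ := h
    rcases hT hab with ⟨-, hfst⟩ | ⟨-, hsnd⟩
    · exact hb (congrArg Prod.snd (hfst _ hrow rfl))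
    · exact ha (congrArg Prod.fst (hsnd _ hcol rfl))

theorem isGreatest_card_isGeodesicFree_rookGraph [Fintype α] [Fintype β] [Nontrivial α]
    [Nontrivial β] :
    IsGreatest {k | ∃ T : Finset (α × β), IsGeodesicFree (rookGraph α β) ↑T ∧ T.card = k}
      (Fintype.card α + Fintype.card β - 2) := by
  classical
  simp only [isGeodesicFree_rookGraph_iff]
  constructor
  · obtain ⟨a, b⟩ : Nonempty (α × β) := inferInstance
    exact ⟨_, puncturedCross_subset_soleInFiber_union a b, card_puncturedCross a b⟩
  · rintro _ ⟨T, hT, rfl⟩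
    exact Nat.le_sub_of_add_le (card_add_two_le_of_subset_soleInFiber_union hT)

end RookGraph

theorem gt_rook_general {α β : Type*} [Fintype α] [Fintype β] [Nonempty α] [Nonempty β]
    (h : Nontrivial α ↔ Nontrivial β) :
    gtransNum ((⊤ : SimpleGraph α) □ (⊤ : SimpleGraph β)) =
      Fintype.card α * Fintype.card β + 2 - (Fintype.card α + Fintype.card β) := by
  have hα : 0 < Fintype.card α := Fintype.card_pos
  have hβ : 0 < Fintype.card β := Fintype.card_pos
  rcases subsingleton_or_nontrivial α with hsub | hnt
  · have : Subsingleton β := not_nontrivial_iff_subsingleton.1 (h.not.1 (not_nontrivial α))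
    have hα₁ : Fintype.card α = 1 := (Fintype.card_le_one_iff_subsingleton.2 hsub).antisymm hα
    have hβ₁ : Fintype.card β = 1 := (Fintype.card_le_one_iff_subsingleton.2 this).antisymm hβ
    rw [Subsingleton.elim (⊤ □ ⊤) ⊥, gtransNum_bot, Fintype.card_prod, hα₁, hβ₁]
  · have := h.1 hnt
    rw [gtransNum_eq_card_sub isGreatest_card_isGeodesicFree_rookGraph, Fintype.card_prod]
    omega

theorem gt_rook (n : ℕ) (hn : 1 ≤ n) :
    gtransNum ((⊤ : SimpleGraph (Fin n)) □ (⊤ : SimpleGraph (Fin n))) = n ^ 2 + 2 - 2 * n := by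
  have : NeZero n := ⟨by omega⟩
  simpa [sq, two_mul] using gt_rook_general (α := Fin n) (β := Fin n) Iff.rfl
end

section
/- If T is a tree, then gpack(T) = gt(T). -/
open SimpleGraph

/-
Root every component of a forest. A connected set has an apex, a vertex of minimal depth, and the
path from the root to a vertex of the set runs inside the set from the apex on. So if two connected
sets meet, the deeper of their apices lies in both. Now choose greedily: take a set whose apex is as
deep as possible, put it in the packing and its apex in the transversal. The sets that avoid this
apex are disjoint from the chosen one, so keeping only these lowers the packing number.
In an infinite forest a deepest apex still exists: the members of a maximal packing are finite and
together meet every set, and an apex is at most as deep as any vertex of its set.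
-/

section PackingBound

variable {V : Type*} {F F' : Set (Set V)} {s : Set V} {k : ℕ}

/-- The set family `F` has packing number at most `k`. Stating a bound, rather than defining the
packing number, leaves no value to be chosen for families with arbitrarily large packings. -/
def HasPackingBound (F : Set (Set V)) (k : ℕ) : Prop :=
  ∀ P : Finset (Set V), (P : Set (Set V)) ⊆ F → (P : Set (Set V)).Pairwise Disjoint → P.card ≤ k

lemma HasPackingBound.eq_empty (h : HasPackingBound F 0) : F = ∅ := by
  refine Set.eq_empty_of_forall_notMem fun s hs ↦ ?_
  simpa using h {s} (by simpa using hs) (by simp)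

lemma HasPackingBound.of_disjoint (h : HasPackingBound F (k + 1)) (hs : s ∈ F)
    (hne : s.Nonempty) (hF' : F' ⊆ F) (hdisj : ∀ a ∈ F', Disjoint s a) :
    HasPackingBound F' k := by
  classical
  intro P hPF hP
  have hsP : s ∉ P := fun hsP ↦ hne.ne_empty (disjoint_self.1 (hdisj s (hPF hsP)))
  have hcard : (insert s P).card ≤ k + 1 := by
    refine h _ ?_ ?_
    · rw [Finset.coe_insert]
      exact Set.insert_subset hs (hPF.trans hF')
    · rw [Finset.coe_insert]
      exact hP.insert fun a ha _ ↦ ⟨hdisj a (hPF ha), (hdisj a (hPF ha)).symm⟩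
  rwa [Finset.card_insert_of_notMem hsP, Nat.add_le_add_iff_right] at hcard

lemma HasPackingBound.exists_finite_transversal (h : HasPackingBound F k)
    (hfin : ∀ s ∈ F, s.Finite) (hne : ∀ s ∈ F, s.Nonempty) :
    ∃ S : Set V, S.Finite ∧ ∀ s ∈ F, (S ∩ s).Nonempty := by
  induction k generalizing F with
  | zero => exact ⟨∅, Set.finite_empty, by simp [h.eq_empty]⟩
  | succ k ih =>
    obtain rfl | ⟨s, hs⟩ := F.eq_empty_or_nonempty
    · exact ⟨∅, Set.finite_empty, by simp⟩
    have hsub : {a ∈ F | Disjoint s a} ⊆ F := Set.sep_subset _ _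
    obtain ⟨S, hSfin, hS⟩ := ih (h.of_disjoint hs (hne s hs) hsub fun a ha ↦ ha.2)
      (fun a ha ↦ hfin a (hsub ha)) (fun a ha ↦ hne a (hsub ha))
    refine ⟨s ∪ S, (hfin s hs).union hSfin, fun a ha ↦ ?_⟩
    by_cases hsa : Disjoint s a
    · exact (hS a ⟨ha, hsa⟩).mono (Set.inter_subset_inter_left a Set.subset_union_right)
    · exact (Set.not_disjoint_iff_nonempty_inter.1 hsa).mono
        (Set.inter_subset_inter_left a Set.subset_union_left)

end PackingBound

section Apex

variable {V : Type*} {G : SimpleGraph V} {s s' : Set V} {t t' x y : V}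

/-- The root of the component of `v`: an arbitrary vertex that depends only on the component. -/
noncomputable def root (G : SimpleGraph V) (v : V) : V :=
  Quot.out (G.connectedComponentMk v)

/-- The depth of `v` in `G`, each component being rooted at its `root`. -/
noncomputable def depth (G : SimpleGraph V) (v : V) : ℕ :=
  G.dist (root G v) v

/-- `t` is a vertex of `s` of minimal depth: the top of the subtree `s` of a rooted forest. -/
def IsApex (G : SimpleGraph V) (s : Set V) (t : V) : Prop :=
  t ∈ s ∧ ∀ y ∈ s, depth G t ≤ depth G y

lemma reachable_root (G : SimpleGraph V) (v : V) : G.Reachable (root G v) v :=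
  ConnectedComponent.exact (Quot.out_eq _)

lemma root_eq_of_reachable (h : G.Reachable x y) : root G x = root G y :=
  congrArg Quot.out (ConnectedComponent.sound h)

lemma exists_isApex (G : SimpleGraph V) (hs : s.Nonempty) : ∃ t, IsApex G s t := by
  obtain ⟨t, ht, hmin⟩ := exists_minimalFor_of_wellFoundedLT (· ∈ s) (depth G) hs
  exact ⟨t, ht, fun y hy ↦ (le_total _ _).elim id (hmin hy)⟩

lemma depth_lt_of_mem_support {q : G.Walk (root G t) t} (hq : q.length = depth G t)
    (hy : y ∈ q.support) (hne : y ≠ t) : depth G y < depth G t := by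
  classical
  have hroot : root G y = root G t := root_eq_of_reachable ⟨q.dropUntil y hy⟩
  calc depth G y = G.dist (root G t) y := by rw [depth, hroot]
    _ ≤ (q.takeUntil y hy).length := dist_le _
    _ < q.length := q.length_takeUntil_lt_length hy hne
    _ = depth G t := hq

lemma IsApex.isPath_append (ht : IsApex G s t) {q : G.Walk (root G t) t}
    (hq : q.length = depth G t) {w : G.Walk t x} (hw : w.IsPath) (hws : ∀ y ∈ w.support, y ∈ s) :
    (q.append w).IsPath := by
  have hnodup := hw.support_nodup
  rw [Walk.isPath_def, Walk.support_append, List.nodup_append']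
  refine ⟨(q.isPath_of_length_eq_dist hq).support_nodup, hnodup.tail, fun y hyq hyw ↦ ?_⟩
  have hne : y ≠ t := by
    rintro rfl
    rw [← Walk.cons_tail_support] at hnodup
    exact (List.nodup_cons.1 hnodup).1 hyw
  exact (depth_lt_of_mem_support hq hyq hne).not_ge (ht.2 y (hws y (List.mem_of_mem_tail hyw)))

lemma exists_isPath_support_subset (hs : (G.induce s).Preconnected) (hx : x ∈ s) (hy : y ∈ s) :
    ∃ p : G.Walk x y, p.IsPath ∧ ∀ z ∈ p.support, z ∈ s := by
  obtain ⟨p, hp⟩ := hs.exists_isPath ⟨x, hx⟩ ⟨y, hy⟩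
  let ι : G.induce s ↪g G := Embedding.induce s
  refine ⟨p.map ι.toHom, hp.map ι.injective, fun z hz ↦ ?_⟩
  obtain ⟨a, -, rfl⟩ := List.mem_map.1 (Walk.support_map ι.toHom p ▸ hz)
  exact a.2

lemma IsApex.exists_isPath (ht : IsApex G s t) (hs : (G.induce s).Preconnected) (hx : x ∈ s) :
    ∃ p : G.Walk (root G x) x, p.IsPath ∧ p.getVert (depth G t) = t ∧
      ∀ i, depth G t ≤ i → p.getVert i ∈ s := by
  obtain ⟨q, hq⟩ := (reachable_root G t).exists_walk_length_eq_dist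
  obtain ⟨w, hw, hws⟩ := exists_isPath_support_subset hs ht.1 hx
  have hget (i : ℕ) (hi : depth G t ≤ i) :
      (q.append w).getVert i = w.getVert (i - depth G t) := by
    rw [Walk.getVert_append, hq, ← depth, if_neg hi.not_gt]
  rw [← root_eq_of_reachable ⟨w⟩]
  refine ⟨q.append w, ht.isPath_append hq hw hws, ?_, fun i hi ↦ ?_⟩
  · rw [hget _ le_rfl, Nat.sub_self, Walk.getVert_zero]
  · exact hget i hi ▸ hws _ (w.getVert_mem_support _)

lemma IsApex.mem_of_depth_le (hG : G.IsAcyclic) (ht : IsApex G s t) (ht' : IsApex G s' t')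
    (hs : (G.induce s).Preconnected) (hs' : (G.induce s').Preconnected)
    (hle : depth G t' ≤ depth G t) (hmeet : (s ∩ s').Nonempty) : t ∈ s' := by
  obtain ⟨x, hx, hx'⟩ := hmeet
  obtain ⟨p, hp, hpt, -⟩ := ht.exists_isPath hs hx
  obtain ⟨p', hp', -, hps'⟩ := ht'.exists_isPath hs' hx'
  have hpp' : p = p' := congrArg Subtype.val <|
    (hG.subsingleton_path _ _).elim ⟨p, hp⟩ ⟨p', hp'⟩
  rw [← hpt, hpp']
  exact hps' _ hle

lemma exists_deepest_isApex (G : SimpleGraph V) {F : Set (Set V)} (hF : F.Nonempty) {S : Set V}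
    (hSfin : S.Finite) (hS : ∀ s ∈ F, (S ∩ s).Nonempty) :
    ∃ s ∈ F, ∃ t, IsApex G s t ∧ ∀ s' ∈ F, ∀ t', IsApex G s' t' → depth G t' ≤ depth G t := by
  set D : Set ℕ := {d | ∃ s ∈ F, ∃ t, IsApex G s t ∧ depth G t = d}
  have hne : D.Nonempty := by
    obtain ⟨s, hs⟩ := hF
    obtain ⟨t, ht⟩ := exists_isApex G (hS s hs).right
    exact ⟨_, s, hs, t, ht, rfl⟩
  have hbdd : BddAbove D := by
    obtain ⟨b, hb⟩ := (hSfin.image (depth G)).bddAbove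
    refine ⟨b, ?_⟩
    rintro _ ⟨s, hs, t, ht, rfl⟩
    obtain ⟨y, hyS, hys⟩ := hS s hs
    exact (ht.2 y hys).trans (hb ⟨y, hyS, rfl⟩)
  obtain ⟨s, hs, t, ht, hdt⟩ := Nat.sSup_mem hne hbdd
  exact ⟨s, hs, t, ht, fun s' hs' t' ht' ↦ hdt ▸ le_csSup hbdd ⟨s', hs', t', ht', rfl⟩⟩

lemma HasPackingBound.exists_transversal_card_le {F : Set (Set V)} {k : ℕ}
    (h : HasPackingBound F k) (hG : G.IsAcyclic) (hfin : ∀ s ∈ F, s.Finite)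
    (hconn : ∀ s ∈ F, (G.induce s).Connected) :
    ∃ S : Finset V, S.card ≤ k ∧ ∀ s ∈ F, ((S : Set V) ∩ s).Nonempty := by
  classical
  induction k generalizing F with
  | zero => exact ⟨∅, le_rfl, by simp [h.eq_empty]⟩
  | succ k ih =>
    obtain rfl | hne := F.eq_empty_or_nonempty
    · exact ⟨∅, Nat.zero_le _, by simp⟩
    obtain ⟨S₀, hS₀fin, hS₀⟩ := h.exists_finite_transversal hfin
      fun s hs ↦ Set.nonempty_coe_sort.1 (hconn s hs).nonempty
    obtain ⟨s, hs, t, ht, hdeep⟩ := exists_deepest_isApex G hne hS₀fin hS₀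
    have hsub : {a ∈ F | t ∉ a} ⊆ F := Set.sep_subset _ _
    have hdisj : ∀ a ∈ {a ∈ F | t ∉ a}, Disjoint s a := by
      rintro a ⟨haF, hta⟩
      obtain ⟨u, hu⟩ := exists_isApex G (hS₀ a haF).right
      by_contra hsa
      exact hta <| ht.mem_of_depth_le hG hu (hconn s hs).preconnected (hconn a haF).preconnected
        (hdeep a haF u hu) (Set.not_disjoint_iff_nonempty_inter.1 hsa)
    obtain ⟨S, hcard, hS⟩ := ih (h.of_disjoint hs ⟨t, ht.1⟩ hsub hdisj)
      (fun a ha ↦ hfin a (hsub ha)) (fun a ha ↦ hconn a (hsub ha))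
    refine ⟨insert t S, (Finset.card_insert_le t S).trans (by lia), fun a ha ↦ ?_⟩
    rw [Finset.coe_insert]
    by_cases hta : t ∈ a
    · exact ⟨t, Set.mem_insert t _, hta⟩
    · exact (hS a ⟨ha, hta⟩).mono (Set.inter_subset_inter_left a (Set.subset_insert t _))

end Apex

section Geodesic

variable {V : Type*} {G : SimpleGraph V} {s : Set V}

lemma IsMaxGeodesicSet.finite (hs : IsMaxGeodesicSet G s) : s.Finite := by
  obtain ⟨u, v, p, -, rfl⟩ := hs
  exact p.support.finite_toSet

lemma IsMaxGeodesicSet.connected_induce (hs : IsMaxGeodesicSet G s) :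
    (G.induce s).Connected := by
  obtain ⟨u, v, p, -, rfl⟩ := hs
  exact p.connected_induce_support

lemma IsGeodesicPacking.card_le_card {P : Finset (Set V)} {S : Finset V}
    (hP : IsGeodesicPacking G (P : Set (Set V))) (hS : IsGeodesicTransversal G (S : Set V)) :
    P.card ≤ S.card := by
  refine Finset.card_le_card_of_forall_subsingleton (fun s x ↦ x ∈ s) (fun s hs ↦ ?_) ?_
  · exact hS s (hP.1 s hs)
  · rintro x - a ⟨ha, hxa⟩ b ⟨hb, hxb⟩
    by_contra hab
    exact Set.disjoint_left.1 (hP.2 ha hb hab) hxa hxb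

end Geodesic

theorem gpack_eq_gt_tree_general {V : Type*} (T : SimpleGraph V) (ha : T.IsAcyclic)
    (hbdd : BddAbove {k | ∃ P : Finset (Set V), IsGeodesicPacking T ↑P ∧ P.card = k}) :
    gpackNum T = gtransNum T := by
  have hbound : HasPackingBound {s | IsMaxGeodesicSet T s} (gpackNum T) :=
    fun P hPmax hPdisj ↦ le_csSup hbdd ⟨P, ⟨hPmax, hPdisj⟩, rfl⟩
  obtain ⟨S, hScard, hS : IsGeodesicTransversal T S⟩ := hbound.exists_transversal_card_le ha
    (fun _ hs ↦ hs.finite) (fun _ hs ↦ hs.connected_induce)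
  obtain ⟨P, hP, hPcard⟩ : ∃ P : Finset (Set V), IsGeodesicPacking T ↑P ∧ P.card = gpackNum T := by
    refine Nat.sSup_mem ?_ hbdd
    exact ⟨0, ∅, by simp [IsGeodesicPacking], rfl⟩
  apply le_antisymm
  · refine le_csInf ⟨S.card, S, hS, rfl⟩ ?_
    rintro _ ⟨S', hS', rfl⟩
    exact hPcard ▸ hP.card_le_card hS'
  · exact le_trans (Nat.sInf_le ⟨S, hS, rfl⟩) hScard

theorem gpack_eq_gt_tree {V : Type*} [Fintype V] (T : SimpleGraph V)
    (hc : T.Connected) (ha : T.IsAcyclic) :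
    gpackNum T = gtransNum T := by
  refine gpack_eq_gt_tree_general T ha ⟨Fintype.card (Set V), ?_⟩
  rintro _ ⟨P, -, rfl⟩
  exact P.card_le_univ
end
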